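/- Let S be a complete c-semiring, Σ an alphabet, and A : List Σ → S a formal power series. Then the universal weighted automaton U_A recognizes A: for every word θ, ⨆_{(X,Y), (X',Y') ∈ R_A} J_A(X,Y) ⊗ η_A*((X,Y), θ, (X',Y')) ⊗ G_A(X',Y') = A(θ). -/

import Mathlib

/-!
The upper bound rests on the fact that in a factorization `(X, Y)` the series `Y` is the largest
one with `X · Y ≤ A` (`FPS.le_snd_of_isFactorization`). Hence a transition satisfies
`η (p, σ, r) ⊗ Y_r(v) ≤ Y_p(σ v)`, and by induction on the word the future of a state `p` is at
most `Y_p` (`FPS.deltaStar_mul_le`). So a path weight is at most `X_p(ε) ⊗ Y_p(θ) ≤ A(θ)`.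

For the lower bound, each word `u` gives a factorization `(A / Y_u, Y_u)` with `Y_u(v) = A(u v)`
(`FPS.stateOf`), in which `u` has weight `1` on the left. The transition from the state of `u` to
that of `u σ` has weight `1`, so the path from the state of `ε` to the state of `θ` that reads `θ`
has weight `1 ⊗ 1 ⊗ Y_θ(ε) = A(θ)`.
-/

/-- A complete c-semiring: a complete lattice with a commutative monoid
multiplication distributing over arbitrary suprema, whose unit is the top element.
Addition is join, zero is `⊥`, infinitary sums are suprema. -/
class CompleteCSemiring (S : Type*) extends CompleteLattice S, CommMonoid S where
  mul_sSup : ∀ (a : S) (s : Set S), a * sSup s = ⨆ b ∈ s, a * b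
  one_eq_top : (1 : S) = ⊤

namespace FPS

open Classical
noncomputable section

variable {S : Type*} [CompleteCSemiring S] {α : Type*}

/-- Cauchy product of formal power series. -/
def cauchy (A B : List α → S) : List α → S :=
  fun w => ⨆ (u : List α) (v : List α) (_ : u ++ v = w), A u * B v

/-- Left quotient of `A` by the series `X`. -/
def lquot (X A : List α → S) : List α → S := fun v => ⨆ u : List α, X u * A (u ++ v)

/-- Right quotient of `A` by the series `Y`. -/
def rquot (A Y : List α → S) : List α → S := fun v => ⨆ u : List α, A (v ++ u) * Y u

/-- Left residual `X \ A`. -/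
def lres (X A : List α → S) : List α → S := sSup {Z | cauchy X Z ≤ A}

/-- Right residual `A / Y`. -/
def rres (A Y : List α → S) : List α → S := sSup {Z | cauchy Z Y ≤ A}

/-- Residual in the semiring `S`: `a ⇨ b`. -/
def resid (a b : S) : S := sSup {x | a * x ≤ b}

/-- Inclusion degree of the series `f` into `g`. -/
def incl (f g : List α → S) : S := ⨅ u : List α, resid (f u) (g u)

/-- A word viewed as a series: `1` at `u` and `⊥` elsewhere. -/
def wordSeries (u : List α) : List α → S := fun w => if w = u then 1 else ⊥

/-- Reversal of a series. -/
def rev (A : List α → S) : List α → S := fun w => A w.reverse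

/-- Extended transition map of a weighted automaton. -/
def deltaStar {Q : Type*} (δ : Q → α → Q → S) : Q → List α → Q → S
  | q, [], p => ⨆ _ : q = p, 1
  | q, a :: w, p => ⨆ r : Q, δ q a r * deltaStar δ r w p

/-- Behaviour of a weighted automaton. -/
def behavior {Q : Type*} (δ : Q → α → Q → S) (I F : Q → S) : List α → S :=
  fun w => ⨆ (p : Q) (q : Q), I p * deltaStar δ p w q * F q

/-- Past of a state of a weighted automaton. -/
def past {Q : Type*} (δ : Q → α → Q → S) (I : Q → S) (q : Q) : List α → S :=
  fun w => ⨆ p : Q, I p * deltaStar δ p w q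

/-- Future of a state of a weighted automaton. -/
def fut {Q : Type*} (δ : Q → α → Q → S) (F : Q → S) (q : Q) : List α → S :=
  fun w => ⨆ p : Q, deltaStar δ q w p * F p

/-- A series is DWA-regular if it is recognized by a finite deterministic
weighted automaton. -/
def DWARegular (A : List α → S) : Prop :=
  ∃ (Q : Type) (_ : Fintype Q) (δ : Q → α → Q) (q0 : Q) (F : Q → S),
    ∀ w : List α, A w = F (w.foldl δ q0)

/-- A series is regular if it is the behaviour of a finite weighted automaton. -/
def Regular (A : List α → S) : Prop :=
  ∃ (Q : Type) (_ : Fintype Q) (δ : Q → α → Q → S) (I F : Q → S),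
    behavior δ I F = A

/-- `(X, Y)` is a factorization of `A`. -/
def IsFactorization (A X Y : List α → S) : Prop :=
  cauchy X Y ≤ A ∧
    ∀ X' Y' : List α → S, X ≤ X' → Y ≤ Y' → cauchy X' Y' ≤ A → X' = X ∧ Y' = Y

/-- The set of factorizations of `A` (states of the universal weighted automaton). -/
def Fact (A : List α → S) := {p : (List α → S) × (List α → S) // IsFactorization A p.1 p.2}

/-- Initial weights of the universal weighted automaton. -/
def JA (A : List α → S) (p : Fact A) : S := p.1.1 []

/-- Final weights of the universal weighted automaton. -/
def GA (A : List α → S) (p : Fact A) : S := p.1.2 []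

/-- Transition weights of the universal weighted automaton. -/
def etaA (A : List α → S) (p : Fact A) (σ : α) (q : Fact A) : S :=
  incl (cauchy (cauchy p.1.1 (wordSeries [σ])) q.1.2) A

/-- The relation `u ≡_A v`. -/
def eqA (A : List α → S) : Setoid (List α) where
  r u v := ∀ w, A (u ++ w) = A (v ++ w)
  iseqv := ⟨fun _ _ => rfl, fun h w => (h w).symm, fun h1 h2 w => (h1 w).trans (h2 w)⟩

end

end FPS

namespace FPS

section Semiring

variable {S : Type*} [CompleteCSemiring S]

theorem mul_iSup_eq {ι : Sort*} (a : S) (f : ι → S) : a * (⨆ i, f i) = ⨆ i, a * f i := by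
  rw [iSup, CompleteCSemiring.mul_sSup, iSup_range]

theorem iSup_mul_eq {ι : Sort*} (a : S) (f : ι → S) : (⨆ i, f i) * a = ⨆ i, f i * a := by
  simp only [mul_comm _ a, mul_iSup_eq]

theorem mul_mono_right {a b : S} (c : S) (h : a ≤ b) : c * a ≤ c * b := by
  have hs : c * sSup {a, b} = c * b := by rw [sSup_pair, sup_eq_right.2 h]
  rw [← hs, CompleteCSemiring.mul_sSup]
  exact le_biSup (fun x => c * x) (Set.mem_insert a {b})

theorem mul_mono {a b c d : S} (h : a ≤ b) (h' : c ≤ d) : a * c ≤ b * d :=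
  (mul_mono_right a h').trans (by simpa only [mul_comm _ d] using mul_mono_right d h)

theorem le_one_of (a : S) : a ≤ 1 := by
  rw [CompleteCSemiring.one_eq_top]
  exact le_top

theorem le_resid_iff {a b x : S} : x ≤ resid a b ↔ a * x ≤ b := by
  refine ⟨fun h => (mul_mono_right a h).trans ?_, fun h => le_sSup h⟩
  rw [resid, CompleteCSemiring.mul_sSup]
  exact iSup₂_le fun _ hx => hx

end Semiring

variable {S : Type*} [CompleteCSemiring S] {α : Type*}

theorem cauchy_le_iff {A X Y : List α → S} :
    cauchy X Y ≤ A ↔ ∀ u v, X u * Y v ≤ A (u ++ v) := by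
  constructor
  · intro h u v
    refine le_trans ?_ (h (u ++ v))
    exact le_iSup_of_le u (le_iSup_of_le v (le_iSup_of_le rfl le_rfl))
  · intro h w
    refine iSup_le fun u => iSup_le fun v => iSup_le ?_
    rintro rfl
    exact h u v

theorem le_incl_iff {f g : List α → S} {x : S} : x ≤ incl f g ↔ ∀ u, f u * x ≤ g u := by
  simp only [incl, le_iInf_iff, le_resid_iff]

/-- Scaling by `x` distributes over the Cauchy product, so a bound on `X · σ · Y` reduces to the
words `u σ v`. -/
theorem le_incl_letter_iff {A X Y : List α → S} {σ : α} {x : S} :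
    x ≤ incl (cauchy (cauchy X (wordSeries [σ])) Y) A ↔
      ∀ u v, X u * Y v * x ≤ A (u ++ σ :: v) := by
  rw [le_incl_iff]
  constructor
  · intro h u v
    refine le_trans (mul_mono ?_ le_rfl) (h (u ++ σ :: v))
    refine le_iSup_of_le (u ++ [σ]) (le_iSup_of_le v (le_iSup_of_le (by simp) ?_))
    refine mul_mono ?_ le_rfl
    refine le_iSup_of_le u (le_iSup_of_le [σ] (le_iSup_of_le rfl ?_))
    simp [wordSeries]
  · intro h w
    simp only [cauchy, iSup_mul_eq, iSup_le_iff]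
    rintro _ v rfl u t rfl
    by_cases ht : t = [σ]
    · subst ht
      simpa [wordSeries] using h u v
    · have hbot : ∀ a : S, a * ⊥ = ⊥ := fun a => by
        simpa using CompleteCSemiring.mul_sSup a ∅
      simp [wordSeries, ht, hbot, mul_comm ⊥]

/-- The right component of a factorization contains every value compatible with the left one. -/
theorem le_snd_of_isFactorization {A X Y : List α → S} (h : IsFactorization A X Y)
    {w : List α} {c : S} (hc : ∀ x, X x * c ≤ A (x ++ w)) : c ≤ Y w := by
  -- Enlarge `Y` at `w` by `c`; maximality says that nothing has changed.
  have hZ := (h.2 X (fun v => Y v ⊔ ⨆ _ : v = w, c) le_rfl (fun v => le_sup_left) ?_).2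
  · rw [← congrFun hZ w]
    exact le_sup_of_le_right (le_iSup_of_le rfl le_rfl)
  · rw [cauchy_le_iff]
    intro u v
    rw [← sSup_pair, CompleteCSemiring.mul_sSup]
    simp only [iSup_insert, iSup_singleton, mul_iSup_eq, sup_le_iff, iSup_le_iff]
    refine ⟨cauchy_le_iff.1 h.1 u v, ?_⟩
    rintro rfl
    exact hc u

theorem etaA_mul_le (A : List α → S) (p r : Fact A) (σ : α) (v : List α) :
    etaA A p σ r * r.1.2 v ≤ p.1.2 (σ :: v) := by
  refine le_snd_of_isFactorization p.2 fun x => ?_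
  rw [mul_comm (etaA A p σ r), ← mul_assoc]
  exact le_incl_letter_iff.1 le_rfl x v

/-- The future of a state of the universal automaton is at most its right component. -/
theorem deltaStar_mul_le (A : List α → S) (w : List α) (p q : Fact A) :
    deltaStar (etaA A) p w q * GA A q ≤ p.1.2 w := by
  induction w generalizing p with
  | nil =>
    simp only [deltaStar, iSup_mul_eq, iSup_le_iff]
    rintro rfl
    rw [one_mul, GA]
  | cons σ w ih =>
    simp only [deltaStar, iSup_mul_eq, iSup_le_iff]
    intro r
    rw [mul_assoc]
    exact (mul_mono_right _ (ih r)).trans (etaA_mul_le A p r σ w)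

/-- The factorization `(A / Y_u, Y_u)` of `A` with `Y_u(v) = A(u v)`; the residual `A / Y_u` is
written out pointwise. -/
def stateOf (A : List α → S) (u : List α) : Fact A :=
  ⟨(fun x => ⨅ v, resid (A (u ++ v)) (A (x ++ v)), fun v => A (u ++ v)), by
    have hX : ∀ x v, (⨅ v, resid (A (u ++ v)) (A (x ++ v))) * A (u ++ v) ≤ A (x ++ v) := by
      intro x v
      rw [mul_comm]
      exact le_resid_iff.1 (iInf_le _ v)
    refine ⟨cauchy_le_iff.2 hX, fun X' Y' h₁ h₂ h => ?_⟩
    rw [cauchy_le_iff] at h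
    have hu : X' u = 1 := by
      refine le_antisymm (le_one_of _) (le_trans ?_ (h₁ u))
      exact le_iInf fun v => le_resid_iff.2 (mul_one _).le
    refine ⟨le_antisymm (fun x => le_iInf fun v => le_resid_iff.2 ?_) h₁,
      le_antisymm (fun v => ?_) h₂⟩
    · rw [mul_comm]
      exact (mul_mono_right _ (h₂ v)).trans (h x v)
    · simpa [hu] using h u v⟩

theorem one_le_etaA_stateOf (A : List α → S) (u : List α) (σ : α) :
    1 ≤ etaA A (stateOf A u) σ (stateOf A (u ++ [σ])) := by
  refine le_incl_letter_iff.2 fun x v => ?_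
  have h := cauchy_le_iff.1 (stateOf A u).2.1 x (σ :: v)
  simpa [stateOf] using h

theorem one_le_deltaStar_stateOf (A : List α → S) (w u : List α) :
    1 ≤ deltaStar (etaA A) (stateOf A u) w (stateOf A (u ++ w)) := by
  induction w generalizing u with
  | nil => exact le_iSup_of_le (by simp) le_rfl
  | cons σ w ih =>
    refine le_iSup_of_le (stateOf A (u ++ [σ])) ?_
    have h := mul_mono (one_le_etaA_stateOf A u σ) (ih (u ++ [σ]))
    simpa using h

end FPS

open FPS in
/-- the universal weighted automaton of `A` recognizes `A`. -/
theorem universal_recognizes {S : Type*} [CompleteCSemiring S] {α : Type*}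
    (A : List α → S) :
    behavior (etaA A) (JA A) (GA A) = A := by
  funext θ
  apply le_antisymm
  · refine iSup_le fun p => iSup_le fun q => ?_
    rw [mul_assoc]
    exact (mul_mono_right _ (deltaStar_mul_le A θ p q)).trans (cauchy_le_iff.1 p.2.1 [] θ)
  · refine le_iSup_of_le (stateOf A []) (le_iSup_of_le (stateOf A θ) ?_)
    have hJ : 1 ≤ JA A (stateOf A []) :=
      le_iInf fun v => le_resid_iff.2 (mul_one _).le
    have hG : A θ ≤ GA A (stateOf A θ) := by simp [GA, stateOf]
    simpa using mul_mono (mul_mono hJ (one_le_deltaStar_stateOf A θ [])) hG
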